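/- arXiv:1912.12245 — 2 statements merged into one kernel-verified Lean document; each statement's English description precedes it below -/
import Mathlib

section
/- Integration-by-parts (multiplier) identity for the sixth-order equation: Let ν, α, L > 0, k ∈ ℤ \ {0}, λ ∈ ℝ. Let ξ, f : [0,L] → ℂ both be of class C⁶ and both satisfy the sixth-order ODE (E6) on (0,L). Assume ξ satisfies the boundary conditions (BC6) together with ξ'(L) = 0, and assume f(0) = f''(0) = f⁽⁴⁾(0) = 0. Then −ξ⁽⁵⁾(L) f(L) + ξ⁽⁴⁾(L) f'(L) − ξ⁽⁴⁾(0) f'(0) = 0. -/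
/-!
The operator in (E6) contains only even derivatives, so it is formally self-adjoint: for
`Λ u = -u⁽⁶⁾ + P u⁽⁴⁾ - Q u'' + R u`, the expression `f Λξ - ξ Λf` is the derivative of the
bilinear concomitant `W` (`concomitant`), which is what repeated integration by parts produces.
As `Λξ = Λf = 0` on `(0,L)`, `W` takes the same value at `0` and `L`.
The boundary conditions give `W(0) = ξ⁽⁴⁾(0) f'(0)`. At `L`, (BC6) and `ξ'(L) = 0` force
`ξ = ξ' = ξ'' = ξ''' = 0`, hence `W(L) = -ξ⁽⁵⁾(L) f(L) + ξ⁽⁴⁾(L) f'(L)`.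
-/


/-- The sixth-order ODE (E6) on `(0,L)`. -/
def E6 (ν α L lam : ℝ) (k : ℤ) (ξ : ℝ → ℂ) : Prop :=
  ∀ x ∈ Set.Ioo (0:ℝ) L,
    -iteratedDeriv 6 ξ x
      + ((lam : ℂ) / (α : ℂ) + (lam : ℂ) / (ν : ℂ) + 3 * (k : ℂ)^2) * iteratedDeriv 4 ξ x
      - (((lam : ℂ) / (ν : ℂ) + 2 * (k : ℂ)^2) * ((lam : ℂ) / (α : ℂ) + (k : ℂ)^2)
          + (k : ℂ)^2 * ((lam : ℂ) / (ν : ℂ) + (k : ℂ)^2)) * iteratedDeriv 2 ξ x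
      + (k : ℂ)^2 * ((lam : ℂ) / (ν : ℂ) + (k : ℂ)^2) * ((lam : ℂ) / (α : ℂ) + (k : ℂ)^2) * ξ x
      = 0

/-- The boundary conditions (BC6). -/
def BC6 (α L lam : ℝ) (k : ℤ) (ξ : ℝ → ℂ) : Prop :=
  ξ 0 = 0 ∧ ξ L = 0 ∧ iteratedDeriv 2 ξ 0 = 0 ∧ iteratedDeriv 2 ξ L = 0 ∧
  iteratedDeriv 3 ξ 0 - ((lam : ℂ) / (α : ℂ) + (k : ℂ)^2) * deriv ξ 0 = 0 ∧
  iteratedDeriv 3 ξ L - ((lam : ℂ) / (α : ℂ) + (k : ℂ)^2) * deriv ξ L = 0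

/-- The bilinear concomitant of `u ↦ -u⁽⁶⁾ + P u⁽⁴⁾ - Q u'' + R u`; the zeroth-order
coefficient `R` does not enter. -/
noncomputable def concomitant (P Q : ℂ) (u v : ℝ → ℂ) (x : ℝ) : ℂ :=
  -(iteratedDeriv 5 u x * iteratedDeriv 0 v x - iteratedDeriv 4 u x * iteratedDeriv 1 v x
      + iteratedDeriv 3 u x * iteratedDeriv 2 v x - iteratedDeriv 2 u x * iteratedDeriv 3 v x
      + iteratedDeriv 1 u x * iteratedDeriv 4 v x - iteratedDeriv 0 u x * iteratedDeriv 5 v x)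
    + P * (iteratedDeriv 3 u x * iteratedDeriv 0 v x - iteratedDeriv 2 u x * iteratedDeriv 1 v x
      + iteratedDeriv 1 u x * iteratedDeriv 2 v x - iteratedDeriv 0 u x * iteratedDeriv 3 v x)
    - Q * (iteratedDeriv 1 u x * iteratedDeriv 0 v x - iteratedDeriv 0 u x * iteratedDeriv 1 v x)

lemma hasDerivAt_iteratedDeriv_of_contDiff {u : ℝ → ℂ} (hu : ContDiff ℝ 6 u) (n : ℕ)
    (hn : n < 6) (x : ℝ) :
    HasDerivAt (iteratedDeriv n u) (iteratedDeriv (n + 1) u x) x := by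
  rw [iteratedDeriv_succ]
  exact (hu.differentiable_iteratedDeriv n (by exact_mod_cast hn) x).hasDerivAt

/-- Lagrange's identity: all products of two derivatives of positive order cancel. -/
lemma hasDerivAt_concomitant (P Q : ℂ) {u v : ℝ → ℂ} (hu : ContDiff ℝ 6 u)
    (hv : ContDiff ℝ 6 v) (x : ℝ) :
    HasDerivAt (concomitant P Q u v)
      (v x * (-iteratedDeriv 6 u x + P * iteratedDeriv 4 u x - Q * iteratedDeriv 2 u x)
        - u x * (-iteratedDeriv 6 v x + P * iteratedDeriv 4 v x - Q * iteratedDeriv 2 v x)) x := by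
  have a := fun n hn => hasDerivAt_iteratedDeriv_of_contDiff hu n hn x
  have b := fun n hn => hasDerivAt_iteratedDeriv_of_contDiff hv n hn x
  have m := fun i j hi hj => (a i hi).mul (b j hj)
  have h := ((((((((m 5 0 (by simp) (by simp)).sub (m 4 1 (by simp) (by simp))).add
    (m 3 2 (by simp) (by simp))).sub (m 2 3 (by simp) (by simp))).add
    (m 1 4 (by simp) (by simp))).sub (m 0 5 (by simp) (by simp))).neg).add
    (((((m 3 0 (by simp) (by simp)).sub (m 2 1 (by simp) (by simp))).add
    (m 1 2 (by simp) (by simp))).sub (m 0 3 (by simp) (by simp))).const_mul P)).sub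
    (((m 1 0 (by simp) (by simp)).sub (m 0 1 (by simp) (by simp))).const_mul Q)
  refine HasDerivAt.congr_deriv (f := concomitant P Q u v) h ?_
  simp only [iteratedDeriv_zero, Nat.reduceAdd]
  ring

/-- Integration-by-parts (multiplier) identity for the sixth-order equation:
if `ξ` and `f` both solve (E6), `ξ` satisfies (BC6) and `ξ'(L) = 0`, and
`f(0) = f''(0) = f⁽⁴⁾(0) = 0`, then
`−ξ⁽⁵⁾(L) f(L) + ξ⁽⁴⁾(L) f'(L) − ξ⁽⁴⁾(0) f'(0) = 0`. -/
theorem multiplier_identity (ν α L : ℝ) (hν : 0 < ν) (hα : 0 < α) (hL : 0 < L)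
    (k : ℤ) (hk : k ≠ 0) (lam : ℝ) (ξ f : ℝ → ℂ)
    (hξ : ContDiff ℝ 6 ξ) (hf : ContDiff ℝ 6 f)
    (hξE6 : E6 ν α L lam k ξ) (hfE6 : E6 ν α L lam k f)
    (hξBC : BC6 α L lam k ξ) (hξobs : deriv ξ L = 0)
    (hf0 : f 0 = 0) (hf2 : iteratedDeriv 2 f 0 = 0) (hf4 : iteratedDeriv 4 f 0 = 0) :
    -iteratedDeriv 5 ξ L * f L + iteratedDeriv 4 ξ L * deriv f L
      - iteratedDeriv 4 ξ 0 * deriv f 0 = 0 := by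
  obtain ⟨h0, hL0, h20, h2L, -, h3L⟩ := hξBC
  rw [hξobs, mul_zero, sub_zero] at h3L
  let P : ℂ := (lam : ℂ) / (α : ℂ) + (lam : ℂ) / (ν : ℂ) + 3 * (k : ℂ)^2
  let Q : ℂ := ((lam : ℂ) / (ν : ℂ) + 2 * (k : ℂ)^2) * ((lam : ℂ) / (α : ℂ) + (k : ℂ)^2)
          + (k : ℂ)^2 * ((lam : ℂ) / (ν : ℂ) + (k : ℂ)^2)
  -- (E6) is only available on the open interval, so equality of the endpoint values comes from
  -- the fundamental theorem of calculus for a continuous function with zero derivative inside.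
  have hW : concomitant P Q ξ f L - concomitant P Q ξ f 0 = 0 := by
    have key := intervalIntegral.integral_eq_sub_of_hasDerivAt_of_le
      (f := concomitant P Q ξ f) (f' := fun _ => 0) hL.le
      (fun x _ => (hasDerivAt_concomitant P Q hξ hf x).continuousAt.continuousWithinAt)
      (fun x hx => by
        refine (hasDerivAt_concomitant P Q hξ hf x).congr_deriv ?_
        linear_combination f x * hξE6 x hx - ξ x * hfE6 x hx)
      intervalIntegrable_const
    simpa using key.symm
  simp only [concomitant, iteratedDeriv_zero, iteratedDeriv_one, h0, hL0, h20, h2L, h3L, hξobs,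
    hf0, hf2, hf4] at hW
  linear_combination hW
end

section
/- Unique continuation for the sixth-order eigenvalue problem under invertibility of R: Let ν, α, L > 0 with α ≠ ν, k ∈ ℤ \ {0}, and λ ∈ ℝ with λ < −νk². Let μ₁, μ₂ ∈ ℂ satisfy μ₁² = k² + λ/ν and μ₂² = k² + λ/α, and suppose the 3×3 matrix R with rows (k, μ₁, μ₂), (sinh(kL), sinh(μ₁L), sinh(μ₂L)), (k cosh(kL), μ₁ cosh(μ₁L), μ₂ cosh(μ₂L)) is invertible. If ξ : [0,L] → ℂ is of class C⁶, satisfies the sixth-order ODE (E6) on (0,L) with boundary conditions (BC6), and ξ'(L) = 0, then ξ = 0 identically on [0,L]. -/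
/-!
Write `a = k²`, `b = μ₁²`, `c = μ₂²`.  The ODE (E6) is `(D² - a)(D² - b)(D² - c) ξ = 0`, and the
operator is formally self-adjoint.  For `m² ∈ {a, b, c}` the multiplier `f x = sinh (m x)` solves
the same ODE, so the bilinear concomitant of `f` and `ξ` is constant on `[0, L]`
(`concomitant_const`).  The boundary conditions and `ξ'(L) = 0` reduce the equality of its values at
`0` and at `L` to `f'(0) ξ⁽⁴⁾(0) + f(L) ξ⁽⁵⁾(L) - f'(L) ξ⁽⁴⁾(L) = 0`.  For `m = k, μ₁, μ₂` this says
that the row vector `(ξ⁽⁴⁾(0), ξ⁽⁵⁾(L), -ξ⁽⁴⁾(L))` is annihilated by `R`, hence it is zero as `R` is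
invertible.  All Cauchy data of `ξ` at `L` therefore vanish, and the second-order factors are
removed one at a time by `second_order_unique`.
-/

open Complex

lemma eq_of_deriv_zero_Icc {L : ℝ} {F F' : ℝ → ℂ}
    (hF : ∀ x, HasDerivAt F (F' x) x) (h0 : ∀ x ∈ Set.Icc (0:ℝ) L, F' x = 0) :
    ∀ x ∈ Set.Icc (0:ℝ) L, F x = F 0 :=
  constant_of_has_deriv_right_zero
    (fun x _ => (hF x).continuousAt.continuousWithinAt)
    (fun x hx => by
      have h := (hF x).hasDerivWithinAt (s := Set.Ici x)
      rwa [h0 x ⟨hx.1, hx.2.le⟩] at h)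

lemma hasDerivAt_mul_ofReal (m : ℂ) (x : ℝ) :
    HasDerivAt (fun y : ℝ => m * (y : ℂ)) m x := by
  simpa using (Complex.ofRealCLM.hasDerivAt (x := x)).const_mul m

/-- A first-order equation `g' = m g` with zero terminal value, via the integrating factor
`exp (-m x)`. -/
lemma first_order_unique {L : ℝ} (hL : 0 ≤ L) (m : ℂ) {g g₁ : ℝ → ℂ}
    (hg : ∀ x, HasDerivAt g (g₁ x) x) (hode : ∀ x ∈ Set.Icc (0:ℝ) L, g₁ x = m * g x)
    (hgL : g L = 0) : ∀ x ∈ Set.Icc (0:ℝ) L, g x = 0 := by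
  have hF := eq_of_deriv_zero_Icc (L := L)
    (fun x => (hg x).mul (hasDerivAt_mul_ofReal (-m) x).cexp)
    (fun x hx => by rw [hode x hx]; ring)
  intro x hx
  have h := (hF x hx).trans (hF L ⟨hL, le_rfl⟩).symm
  simpa [hgL, Complex.exp_ne_zero] using h

/-- Backward uniqueness for `g'' = m² g`, by the factorization `(D + m)(D - m)`. -/
lemma second_order_unique {L : ℝ} (hL : 0 ≤ L) (m : ℂ) {g g₁ g₂ : ℝ → ℂ}
    (hg : ∀ x, HasDerivAt g (g₁ x) x) (hg₁ : ∀ x, HasDerivAt g₁ (g₂ x) x)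
    (hode : ∀ x ∈ Set.Icc (0:ℝ) L, g₂ x = m ^ 2 * g x)
    (hgL : g L = 0) (hg₁L : g₁ L = 0) : ∀ x ∈ Set.Icc (0:ℝ) L, g x = 0 := by
  have h := first_order_unique hL (-m) (g := fun x => g₁ x - m * g x)
    (fun x => (hg₁ x).sub ((hg x).const_mul m))
    (fun x hx => by rw [hode x hx]; ring) (by simp [hgL, hg₁L])
  exact first_order_unique hL m hg (fun x hx => sub_eq_zero.mp (h x hx)) hgL

/-- The bilinear concomitant of `sinh (m x)` and a solution of
`u⁽⁶⁾ = s u⁽⁴⁾ - t u'' + p u` has equal values at `0` and `L` when `m` is a characteristic root;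
the conclusion is this equality with the boundary data inserted. Here `u₀, …, u₆` are the solution
and its successive derivatives. -/
lemma concomitant_const {L : ℝ} (hL : 0 ≤ L) (m s t p : ℂ)
    (hm : m ^ 6 = s * m ^ 4 - t * m ^ 2 + p) {u₀ u₁ u₂ u₃ u₄ u₅ u₆ : ℝ → ℂ}
    (h₀ : ∀ x, HasDerivAt u₀ (u₁ x) x) (h₁ : ∀ x, HasDerivAt u₁ (u₂ x) x)
    (h₂ : ∀ x, HasDerivAt u₂ (u₃ x) x) (h₃ : ∀ x, HasDerivAt u₃ (u₄ x) x)
    (h₄ : ∀ x, HasDerivAt u₄ (u₅ x) x) (h₅ : ∀ x, HasDerivAt u₅ (u₆ x) x)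
    (hode : ∀ x ∈ Set.Icc (0:ℝ) L, u₆ x = s * u₄ x - t * u₂ x + p * u₀ x)
    (h00 : u₀ 0 = 0) (h20 : u₂ 0 = 0)
    (h0L : u₀ L = 0) (h1L : u₁ L = 0) (h2L : u₂ L = 0) (h3L : u₃ L = 0) :
    u₄ 0 * m + u₅ L * Complex.sinh (m * L) - u₄ L * (m * Complex.cosh (m * L)) = 0 := by
  have hS := fun x : ℝ =>
    (Complex.hasDerivAt_sinh (m * (x : ℂ))).comp x (hasDerivAt_mul_ofReal m x)
  have hC := fun x : ℝ =>
    (Complex.hasDerivAt_cosh (m * (x : ℂ))).comp x (hasDerivAt_mul_ofReal m x)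
  -- The concomitant, with the even derivatives of the multiplier collected in the coefficient of
  -- `sinh (m x)` and the odd ones in that of `cosh (m x)`.
  have hF := eq_of_deriv_zero_Icc (L := L)
    (fun x => ((hS x).mul
      (((((h₅ x).add ((h₃ x).const_mul (m ^ 2))).add ((h₁ x).const_mul (m ^ 4))).sub
        (((h₃ x).add ((h₁ x).const_mul (m ^ 2))).const_mul s)).add ((h₁ x).const_mul t))).sub
      ((hC x).mul
      (((((h₄ x).const_mul m).add ((h₂ x).const_mul (m ^ 3))).add ((h₀ x).const_mul (m ^ 5))).sub
        ((((h₂ x).const_mul m).add ((h₀ x).const_mul (m ^ 3))).const_mul s) |>.add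
        ((h₀ x).const_mul (t * m)))))
    (fun x hx => by
      simp only [Pi.add_apply, Pi.sub_apply, Function.comp_apply]
      rw [hode x hx]
      linear_combination (-Complex.sinh (m * x) * u₀ x) * hm)
  have h := hF L ⟨hL, le_rfl⟩
  simp [h00, h20, h0L, h1L, h2L, h3L] at h
  linear_combination h

/-- Unique continuation for the sixth-order eigenvalue problem (E6)–(BC6) under
invertibility of the 3×3 multiplier matrix `R`: together with the observation
`ξ'(L) = 0`, these force `ξ ≡ 0` on `[0,L]`. -/
theorem unique_continuation_E6_of_R_invertible (ν α L : ℝ) (hν : 0 < ν) (hα : 0 < α)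
    (hL : 0 < L) (hαν : α ≠ ν) (k : ℤ) (hk : k ≠ 0) (lam : ℝ)
    (hlam : lam < -ν * (k : ℝ)^2) (μ₁ μ₂ : ℂ)
    (hμ₁ : μ₁^2 = (k : ℂ)^2 + (lam : ℂ) / (ν : ℂ))
    (hμ₂ : μ₂^2 = (k : ℂ)^2 + (lam : ℂ) / (α : ℂ))
    (hR : IsUnit
      (!![(k : ℂ), μ₁, μ₂;
          Complex.sinh ((k : ℂ) * (L : ℂ)), Complex.sinh (μ₁ * (L : ℂ)),
            Complex.sinh (μ₂ * (L : ℂ));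
          (k : ℂ) * Complex.cosh ((k : ℂ) * (L : ℂ)), μ₁ * Complex.cosh (μ₁ * (L : ℂ)),
            μ₂ * Complex.cosh (μ₂ * (L : ℂ))] : Matrix (Fin 3) (Fin 3) ℂ))
    (ξ : ℝ → ℂ) (hξ : ContDiff ℝ 6 ξ) (hE6 : E6 ν α L lam k ξ)
    (hBC6 : BC6 α L lam k ξ) (hobs : deriv ξ L = 0) :
    ∀ x ∈ Set.Icc (0:ℝ) L, ξ x = 0 := by
  obtain ⟨h00, h0L, h20, h2L, -, h3L⟩ := hBC6
  rw [hobs, mul_zero, sub_zero] at h3L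
  have hd : ∀ n : ℕ, n < 6 → ∀ x,
      HasDerivAt (iteratedDeriv n ξ) (iteratedDeriv (n + 1) ξ x) x := by
    intro n hn x
    rw [iteratedDeriv_succ]
    exact (hξ.differentiable_iteratedDeriv n (by exact_mod_cast hn) x).hasDerivAt
  have hc : ∀ n : ℕ, n ≤ 6 → Continuous (iteratedDeriv n ξ) := fun n hn =>
    hξ.continuous_iteratedDeriv n (by exact_mod_cast hn)
  have e0 : iteratedDeriv 0 ξ = ξ := iteratedDeriv_zero
  have e1 : iteratedDeriv 1 ξ = deriv ξ := iteratedDeriv_one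
  have hb : (lam : ℂ) / (ν : ℂ) = μ₁ ^ 2 - (k : ℂ) ^ 2 := by rw [hμ₁]; ring
  have hc' : (lam : ℂ) / (α : ℂ) = μ₂ ^ 2 - (k : ℂ) ^ 2 := by rw [hμ₂]; ring
  -- Elementary symmetric functions of `k²`, `μ₁²`, `μ₂²`.
  obtain ⟨s, hs⟩ : ∃ s, s = (k : ℂ) ^ 2 + μ₁ ^ 2 + μ₂ ^ 2 := ⟨_, rfl⟩
  obtain ⟨t, ht⟩ : ∃ t, t = (k : ℂ) ^ 2 * μ₁ ^ 2 + (k : ℂ) ^ 2 * μ₂ ^ 2 + μ₁ ^ 2 * μ₂ ^ 2 :=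
    ⟨_, rfl⟩
  obtain ⟨p, hp⟩ : ∃ p, p = (k : ℂ) ^ 2 * μ₁ ^ 2 * μ₂ ^ 2 := ⟨_, rfl⟩
  -- By continuity the equation holds up to the endpoints.
  have hode : ∀ x ∈ Set.Icc (0:ℝ) L, iteratedDeriv 6 ξ x
      = s * iteratedDeriv 4 ξ x - t * iteratedDeriv 2 ξ x + p * iteratedDeriv 0 ξ x := by
    have hEq : Set.EqOn (iteratedDeriv 6 ξ) (fun x => s * iteratedDeriv 4 ξ x
        - t * iteratedDeriv 2 ξ x + p * iteratedDeriv 0 ξ x) (Set.Ioo 0 L) := by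
      intro x hx
      have h := hE6 x hx
      rw [hb, hc'] at h
      simp only [e0, hs, ht, hp]
      linear_combination -h
    have h4 := hc 4 (by norm_num)
    have h2 := hc 2 (by norm_num)
    have h0 := hc 0 (by norm_num)
    have := hEq.closure (hc 6 le_rfl) (by fun_prop)
    rwa [closure_Ioo hL.ne] at this
  have key : ∀ m : ℂ, m ^ 6 = s * m ^ 4 - t * m ^ 2 + p →
      iteratedDeriv 4 ξ 0 * m + iteratedDeriv 5 ξ L * Complex.sinh (m * L)
        - iteratedDeriv 4 ξ L * (m * Complex.cosh (m * L)) = 0 := fun m hm =>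
    concomitant_const hL.le m s t p hm (hd 0 (by norm_num)) (hd 1 (by norm_num))
      (hd 2 (by norm_num)) (hd 3 (by norm_num)) (hd 4 (by norm_num)) (hd 5 (by norm_num)) hode
      (by rw [e0, h00]) h20 (by rw [e0, h0L]) (by rw [zero_add, e1, hobs]) h2L h3L
  have k1 := key k (by rw [hs, ht, hp]; ring)
  have k2 := key μ₁ (by rw [hs, ht, hp]; ring)
  have k3 := key μ₂ (by rw [hs, ht, hp]; ring)
  have hv := Matrix.vecMul_injective_of_isUnit hR
    (a₁ := ![iteratedDeriv 4 ξ 0, iteratedDeriv 5 ξ L, -iteratedDeriv 4 ξ L]) (a₂ := 0) (by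
      ext i
      fin_cases i
      · simp [Matrix.vecMul, dotProduct, Fin.sum_univ_three]; linear_combination k1
      · simp [Matrix.vecMul, dotProduct, Fin.sum_univ_three]; linear_combination k2
      · simp [Matrix.vecMul, dotProduct, Fin.sum_univ_three]; linear_combination k3)
  have h5L : iteratedDeriv 5 ξ L = 0 := by simpa using congrFun hv 1
  have h4L : iteratedDeriv 4 ξ L = 0 := by simpa using congrFun hv 2
  have hd0 := hd 0 (by norm_num)
  have hd1 := hd 1 (by norm_num)
  have hd2 := hd 2 (by norm_num)
  have hd3 := hd 3 (by norm_num)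
  have hd4 := hd 4 (by norm_num)
  have hd5 := hd 5 (by norm_num)
  rw [e0, zero_add, e1] at hd0
  rw [e1] at hd1
  rw [e0] at hode
  -- `(D² - μ₁²)(D² - μ₂²) ξ` is killed by `D² - k²` and has zero Cauchy data at `L`.
  have g1 := second_order_unique hL.le (k : ℂ)
    (fun x => ((hd4 x).sub ((hd2 x).const_mul (μ₁ ^ 2 + μ₂ ^ 2))).add
      ((hd0 x).const_mul (μ₁ ^ 2 * μ₂ ^ 2)))
    (fun x => ((hd5 x).sub ((hd3 x).const_mul (μ₁ ^ 2 + μ₂ ^ 2))).add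
      ((hd1 x).const_mul (μ₁ ^ 2 * μ₂ ^ 2)))
    (fun x hx => by
      simp only [Pi.add_apply, Pi.sub_apply]
      rw [hode x hx, hs, ht, hp]; ring)
    (by simp [h4L, h2L, h0L]) (by simp [h5L, h3L, hobs])
  have g2 := second_order_unique hL.le μ₁
    (fun x => (hd2 x).sub ((hd0 x).const_mul (μ₂ ^ 2)))
    (fun x => (hd3 x).sub ((hd1 x).const_mul (μ₂ ^ 2)))
    (fun x hx => by
      have h := g1 x hx
      simp only [Pi.add_apply, Pi.sub_apply] at h ⊢
      linear_combination h)
    (by simp [h2L, h0L]) (by simp [h3L, hobs])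
  exact second_order_unique hL.le μ₂ hd0 hd1
    (fun x hx => by
      have h := g2 x hx
      simp only [Pi.sub_apply] at h
      linear_combination h) h0L hobs
end
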